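/- (Araki–Lieb–Thirring inequality) Let A and B be N×N complex Hermitian positive semidefinite matrices and let r, s be real numbers with r ≥ 1 and s > 0. Then 0 ≤ Tr((A^{1/2} B A^{1/2})^{rs}) ≤ Tr((A^{r/2} B^r A^{r/2})^s), where all real powers of positive semidefinite matrices are defined by the functional calculus (applying t ↦ t^α to the eigenvalues). -/

import Mathlib

/-!
Throughout, `X = A^{1/2} B A^{1/2}` and `Y = A^{r/2} B^r A^{r/2}`, with eigenvalues `x i`, `y i`.

For positive definite `A`, `B` the heart of the matter is the log-majorization of `X ^ r` by `Y`,
in the form (`log_majorization`)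
`(∏ min (y i) (t ^ r)) ^ (1 / r) ≤ ∏ min (x i) t` for all `t > 0`.
It is obtained without antisymmetric tensor powers. Truncate `Y` to `T = min (Y, t ^ r)` and set
`C = A^{-r/2} T A^{-r/2}`. From `T ≤ Y` and `T ≤ t ^ r` one gets `C ≤ B ^ r` and
`C ≤ (t A⁻¹) ^ r`, so the Löwner–Heinz theorem for the exponent `1 / r ≤ 1` gives
`C^{1/r} ≤ B` and `C^{1/r} ≤ t A⁻¹`. Hence `X' = A^{1/2} C^{1/r} A^{1/2}` satisfies `X' ≤ X` and
`X' ≤ t`. In an eigenbasis of `X` the diagonal entries of `X'` are then at most `min (x i) t`, and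
Hadamard's determinant inequality yields `det X' ≤ ∏ min (x i) t`; multiplicativity of the
determinant identifies `det X'` with the left-hand side.

Taking logarithms, `u i = r log (x i)` and `v i = log (y i)` satisfy
`∑ min (v i) τ ≤ ∑ min (u i) τ` for every `τ`, and `∑ u i = ∑ v i` because both are the logarithm
of `(det A · det B) ^ r`. Since `exp (s ·)` is a mixture of hinge functions
`w ↦ w - min w τ` and an affine function, `∑ exp (s u i) ≤ ∑ exp (s v i)`
(`sum_exp_le_of_sum_min`), which is the trace inequality. The semidefinite case follows by applying
this to `A + ε` and `B + ε` and letting `ε → 0`, the functional calculus being continuous.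
-/

open scoped Matrix ComplexOrder

/-- Functional calculus for a Hermitian matrix: apply the real function `f` to the eigenvalues in
a diagonalization provided by the spectral theorem. -/
noncomputable def hermFun {N : ℕ} (f : ℝ → ℝ) (A : Matrix (Fin N) (Fin N) ℂ)
    (hA : A.IsHermitian) : Matrix (Fin N) (Fin N) ℂ :=
  (hA.eigenvectorUnitary : Matrix (Fin N) (Fin N) ℂ) *
    Matrix.diagonal (fun i => (f (hA.eigenvalues i) : ℂ)) *
    (hA.eigenvectorUnitary : Matrix (Fin N) (Fin N) ℂ)ᴴ

namespace ArakiLiebThirring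

open scoped MatrixOrder Matrix.Norms.L2Operator
open Filter Topology

/-! ### Traces and determinants under the functional calculus -/

theorem hermFun_eq_cfc {N : ℕ} (f : ℝ → ℝ) (A : Matrix (Fin N) (Fin N) ℂ)
    (hA : A.IsHermitian) : hermFun f A hA = cfc f A := by
  rw [hA.cfc_eq]
  rfl

theorem trace_cfc_eq {N : ℕ} (f : ℝ → ℝ) (A : Matrix (Fin N) (Fin N) ℂ)
    (hA : A.IsHermitian) : (Matrix.trace (cfc f A)).re = ∑ i, f (hA.eigenvalues i) := by
  rw [hA.cfc_eq, Matrix.IsHermitian.cfc, Unitary.conjStarAlgAut_apply, Matrix.trace_mul_comm,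
    ← mul_assoc]
  simp [Matrix.trace]

theorem det_cfc_eq {N : ℕ} (f : ℝ → ℝ) (A : Matrix (Fin N) (Fin N) ℂ)
    (hA : A.IsHermitian) : (cfc f A).det = ∏ i, ((f (hA.eigenvalues i) : ℝ) : ℂ) := by
  rw [hA.cfc_eq, Matrix.IsHermitian.cfc, Unitary.conjStarAlgAut_apply, Matrix.det_mul_comm,
    ← mul_assoc]
  simp

/-! ### Determinant bounds -/

/-- Hadamard's determinant inequality. After rescaling the diagonal to be at most `1` it says that
nonnegative eigenvalues with mean at most `1` have product at most `1`. -/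
theorem det_le_prod_of_diag_le {N : ℕ} {W : Matrix (Fin N) (Fin N) ℂ} (hW : W.PosSemidef)
    {m : Fin N → ℝ} (hm : ∀ i, 0 < m i) (hd : ∀ i, (W i i).re ≤ m i) :
    W.det.re ≤ ∏ i, m i := by
  set D : Matrix (Fin N) (Fin N) ℂ := Matrix.diagonal fun i => ((Real.sqrt (m i))⁻¹ : ℝ) with hD
  have hDH : Dᴴ = D := by
    rw [hD, Matrix.diagonal_conjTranspose]; congr 1; ext i; simp
  have hZ : (D * W * D).PosSemidef := by
    have := hW.mul_mul_conjTranspose_same D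
    rwa [hDH] at this
  have hsq : ∀ i, Real.sqrt (m i) * Real.sqrt (m i) = m i := fun i => Real.mul_self_sqrt (hm i).le
  have htr : ∑ i, hZ.1.eigenvalues i ≤ N := by
    have h1 : (Matrix.trace (D * W * D)).re = ∑ i, hZ.1.eigenvalues i := by
      rw [hZ.1.trace_eq_sum_eigenvalues]; simp
    rw [← h1, Matrix.trace]
    simp only [Matrix.diag_apply, hD, Matrix.mul_diagonal, Matrix.diagonal_mul, Complex.re_sum]
    calc _ ≤ ∑ i : Fin N, (1 : ℝ) := by
          refine Finset.sum_le_sum fun i _ => ?_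
          have h2 : (((Real.sqrt (m i))⁻¹ : ℝ) * W i i * ((Real.sqrt (m i))⁻¹ : ℝ) : ℂ).re
              = (W i i).re / m i := by
            rw [mul_comm, ← mul_assoc, ← Complex.ofReal_mul, Complex.re_ofReal_mul,
              ← mul_inv, hsq, div_eq_inv_mul]
          rw [h2, div_le_one (hm i)]
          exact hd i
      _ = N := by simp
  have hdet : ∏ i, hZ.1.eigenvalues i ≤ 1 := by
    calc ∏ i, hZ.1.eigenvalues i ≤ ∏ i, Real.exp (hZ.1.eigenvalues i - 1) :=
          Finset.prod_le_prod (fun i _ => hZ.eigenvalues_nonneg i)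
            fun i _ => by linarith [Real.add_one_le_exp (hZ.1.eigenvalues i - 1)]
      _ = Real.exp (∑ i, (hZ.1.eigenvalues i - 1)) := (Real.exp_sum _ _).symm
      _ ≤ 1 := by
          rw [Real.exp_le_one_iff, Finset.sum_sub_distrib]
          simpa using htr
  have h3 : (D * W * D).det.re = W.det.re / ∏ i, m i := by
    rw [Matrix.det_mul, Matrix.det_mul, hD, Matrix.det_diagonal, mul_comm, ← mul_assoc,
      ← Complex.ofReal_prod, ← Complex.ofReal_mul, Complex.re_ofReal_mul, div_eq_inv_mul,
      ← Finset.prod_mul_distrib, ← Finset.prod_inv_distrib]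
    simp only [← mul_inv, hsq]
  have h4 : (D * W * D).det.re = ∏ i, hZ.1.eigenvalues i := by
    rw [hZ.1.det_eq_prod_eigenvalues]
    simp only [Complex.coe_algebraMap, ← Complex.ofReal_prod, Complex.ofReal_re]
  rw [← h4, h3, div_le_one (Finset.prod_pos fun i _ => hm i)] at hdet
  exact hdet

/-- A joint upper bound of `X'` by `X` and by the scalar `t` bounds its determinant by that of
`min (X, t)`: pass to an eigenbasis of `X` and apply Hadamard's inequality. -/
theorem det_le_prod_min {N : ℕ} {X X' : Matrix (Fin N) (Fin N) ℂ} (hX : X.PosDef)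
    (h0 : X'.PosSemidef) {t : ℝ} (ht : 0 < t) (h1 : X' ≤ X) (h2 : X' ≤ (t : ℂ) • 1) :
    X'.det.re ≤ ∏ i, min (hX.1.eigenvalues i) t := by
  set U : Matrix (Fin N) (Fin N) ℂ := (hX.1.eigenvectorUnitary : Matrix (Fin N) (Fin N) ℂ) with hU
  have hUU : Uᴴ * U = 1 := Unitary.coe_star_mul_self hX.1.eigenvectorUnitary
  have hXd : Uᴴ * X * U = Matrix.diagonal fun i => ((hX.1.eigenvalues i : ℝ) : ℂ) := by
    have h := hX.1.spectral_theorem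
    rw [Unitary.conjStarAlgAut_apply] at h
    have h' : X = U * (Matrix.diagonal fun i => ((hX.1.eigenvalues i : ℝ) : ℂ)) * Uᴴ := h
    calc Uᴴ * X * U = (Uᴴ * U) * (Matrix.diagonal fun i => ((hX.1.eigenvalues i : ℝ) : ℂ)) *
          (Uᴴ * U) := by conv_lhs => rw [h']
                         simp only [mul_assoc]
      _ = _ := by rw [hUU, one_mul, mul_one]
  have hW : (Uᴴ * X' * U).PosSemidef := h0.conjTranspose_mul_mul_same U
  have hdet : (Uᴴ * X' * U).det = X'.det := by
    rw [Matrix.det_mul_comm, ← mul_assoc, mul_eq_one_comm.mp hUU, one_mul]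
  have key : ∀ Z : Matrix (Fin N) (Fin N) ℂ, X' ≤ Z → ∀ i,
      ((Uᴴ * X' * U) i i).re ≤ ((Uᴴ * Z * U) i i).re := by
    intro Z hZ i
    have h := (Matrix.PosSemidef.conjTranspose_mul_mul_same (Matrix.le_iff.mp hZ) U).diag_nonneg
      (i := i)
    rw [mul_sub, sub_mul, Matrix.sub_apply] at h
    have := (Complex.le_def.mp h).1
    simpa using this
  rw [← hdet]
  refine det_le_prod_of_diag_le hW (fun i => lt_min (hX.eigenvalues_pos i) ht) fun i =>
    le_min ?_ ?_
  · refine (key X h1 i).trans ?_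
    rw [hXd]; simp
  · refine (key _ h2 i).trans ?_
    rw [mul_smul_comm, mul_one, smul_mul_assoc, hUU]; simp

/-! ### From majorization to sums of exponentials -/

/-- Majorization implies the sum inequality for the convex function `exp (s ·)`. On an interval
`[L, R]` containing all the values, `∫ exp (s τ) (w - min w τ) dτ` equals `exp (s w) / s ^ 2` up to
an affine function of `w`, so the hypotheses can be integrated against `exp (s τ)`. -/
theorem sum_exp_le_of_sum_min {N : ℕ} (u v : Fin N → ℝ) {s : ℝ} (hs : 0 < s)
    (hmin : ∀ τ : ℝ, ∑ i, min (v i) τ ≤ ∑ i, min (u i) τ) (hsum : ∑ i, u i = ∑ i, v i) :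
    ∑ i, Real.exp (s * u i) ≤ ∑ i, Real.exp (s * v i) := by
  obtain ⟨L, hL⟩ : ∃ L : ℝ, ∀ i, L ≤ u i ∧ L ≤ v i := by
    obtain ⟨a, ha⟩ := (Set.finite_range u).bddBelow
    obtain ⟨b, hb⟩ := (Set.finite_range v).bddBelow
    exact ⟨min a b, fun i => ⟨(min_le_left _ _).trans (ha ⟨i, rfl⟩),
      (min_le_right _ _).trans (hb ⟨i, rfl⟩)⟩⟩
  obtain ⟨R, hR⟩ : ∃ R : ℝ, ∀ i, u i ≤ R ∧ v i ≤ R := by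
    obtain ⟨a, ha⟩ := (Set.finite_range u).bddAbove
    obtain ⟨b, hb⟩ := (Set.finite_range v).bddAbove
    exact ⟨max a b, fun i => ⟨(ha ⟨i, rfl⟩).trans (le_max_left _ _),
      (hb ⟨i, rfl⟩).trans (le_max_right _ _)⟩⟩
  have hcont : ∀ w : ℝ, Continuous fun τ : ℝ => Real.exp (s * τ) * (w - min w τ) := by
    intro w; fun_prop
  have hint : ∀ w : ℝ, L ≤ w → w ≤ R → ∫ τ in L..R, Real.exp (s * τ) * (w - min w τ) =
      (Real.exp (s * w) - Real.exp (s * L) * (s * (w - L) + 1)) / s ^ 2 := by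
    intro w h1 h2
    rw [← intervalIntegral.integral_add_adjacent_intervals
      ((hcont w).intervalIntegrable L w) ((hcont w).intervalIntegrable w R)]
    have e2 : ∫ τ in w..R, Real.exp (s * τ) * (w - min w τ) = 0 := by
      rw [intervalIntegral.integral_congr (g := fun _ => (0 : ℝ))]
      · simp
      · intro τ hτ
        rw [Set.uIcc_of_le h2] at hτ
        simp [min_eq_left hτ.1]
    have e1 : ∫ τ in L..w, Real.exp (s * τ) * (w - min w τ) =
        ∫ τ in L..w, Real.exp (s * τ) * (w - τ) := by
      refine intervalIntegral.integral_congr fun τ hτ => ?_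
      rw [Set.uIcc_of_le h1] at hτ
      simp [min_eq_right hτ.2]
    have e3 : ∫ τ in L..w, Real.exp (s * τ) * (w - τ) =
        Real.exp (s * w) * ((w - w) / s + 1 / s ^ 2) -
          Real.exp (s * L) * ((w - L) / s + 1 / s ^ 2) := by
      refine intervalIntegral.integral_eq_sub_of_hasDerivAt
        (f := fun τ => Real.exp (s * τ) * ((w - τ) / s + 1 / s ^ 2)) (fun τ _ => ?_)
        (by apply Continuous.intervalIntegrable; fun_prop)
      have d1 : HasDerivAt (fun τ : ℝ => Real.exp (s * τ)) (Real.exp (s * τ) * (s * 1)) τ :=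
        ((hasDerivAt_id τ).const_mul s).exp
      have d2 : HasDerivAt (fun τ : ℝ => (w - τ) / s + 1 / s ^ 2) (-1 / s) τ :=
        (((hasDerivAt_id τ).const_sub w).div_const s).add_const _
      convert! d1.mul d2 using 1
      field_simp
      ring
    rw [e2, e1, e3]
    field_simp
    ring
  have hle : ∑ i, ∫ τ in L..R, Real.exp (s * τ) * (u i - min (u i) τ) ≤
      ∑ i, ∫ τ in L..R, Real.exp (s * τ) * (v i - min (v i) τ) := by
    by_cases hLR : L ≤ R
    · rw [← intervalIntegral.integral_finsetSum
          fun i _ => (hcont (u i)).intervalIntegrable L R,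
        ← intervalIntegral.integral_finsetSum
          fun i _ => (hcont (v i)).intervalIntegrable L R]
      refine intervalIntegral.integral_mono_on hLR
        ((continuous_finsetSum _ fun i _ => hcont (u i)).intervalIntegrable L R)
        ((continuous_finsetSum _ fun i _ => hcont (v i)).intervalIntegrable L R) fun τ _ => ?_
      rw [← Finset.mul_sum, ← Finset.mul_sum, Finset.sum_sub_distrib, Finset.sum_sub_distrib]
      exact mul_le_mul_of_nonneg_left (by linarith [hmin τ]) (Real.exp_pos _).le
    · have : IsEmpty (Fin N) := ⟨fun i => hLR ((hL i).1.trans (hR i).1)⟩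
      simp
  rw [Finset.sum_congr rfl fun i _ => hint (u i) (hL i).1 (hR i).1,
    Finset.sum_congr rfl fun i _ => hint (v i) (hL i).2 (hR i).2,
    ← Finset.sum_div, ← Finset.sum_div, div_le_div_iff_of_pos_right (by positivity),
    Finset.sum_sub_distrib, Finset.sum_sub_distrib, ← Finset.mul_sum, ← Finset.mul_sum,
    Finset.sum_add_distrib, Finset.sum_add_distrib, ← Finset.mul_sum, ← Finset.mul_sum,
    Finset.sum_sub_distrib, Finset.sum_sub_distrib, hsum] at hle
  linarith

/-! ### Powers of positive definite matrices -/

theorem rpow_posDef {N : ℕ} {A : Matrix (Fin N) (Fin N) ℂ} (hA : A.PosDef) (p : ℝ) :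
    (A ^ p).PosDef := by
  have h := hA.isStrictlyPositive
  exact Matrix.isStrictlyPositive_iff_posDef.mp (IsStrictlyPositive.rpow A p h)

theorem conj_posDef {N : ℕ} {A M : Matrix (Fin N) (Fin N) ℂ} (hA : A.PosDef) (hM : M.PosDef)
    (q : ℝ) : (A ^ q * M * A ^ q).PosDef := by
  have hq := rpow_posDef hA q
  have h1 : (A ^ q * M * A ^ q).PosSemidef := by
    have := hM.posSemidef.mul_mul_conjTranspose_same (A ^ q)
    rwa [hq.1.eq] at this
  rw [h1.posDef_iff_isUnit]
  exact (hq.isUnit.mul hM.isUnit).mul hq.isUnit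

theorem det_re_pos {N : ℕ} {A : Matrix (Fin N) (Fin N) ℂ} (hA : A.PosDef) : 0 < A.det.re :=
  (Complex.lt_def.mp hA.det_pos).1

theorem det_re_eq {N : ℕ} {A : Matrix (Fin N) (Fin N) ℂ} (hA : A.IsHermitian) :
    A.det.re = ∏ i, hA.eigenvalues i := by
  rw [hA.det_eq_prod_eigenvalues]
  simp only [Complex.coe_algebraMap, ← Complex.ofReal_prod, Complex.ofReal_re]

theorem det_rpow {N : ℕ} {A : Matrix (Fin N) (Fin N) ℂ} (hA : A.PosDef) (p : ℝ) :
    (A ^ p).det = ((A.det.re ^ p : ℝ) : ℂ) := by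
  rw [CFC.rpow_eq_cfc_real (Matrix.nonneg_iff_posSemidef.mpr hA.posSemidef),
    det_cfc_eq _ _ hA.1, det_re_eq hA.1, ← Complex.ofReal_prod,
    Real.finsetProd_rpow _ _ fun i _ => (hA.eigenvalues_pos i).le]

theorem det_conj {N : ℕ} {A : Matrix (Fin N) (Fin N) ℂ} (hA : A.PosDef) (q : ℝ)
    (M : Matrix (Fin N) (Fin N) ℂ) :
    (A ^ q * M * A ^ q).det.re = A.det.re ^ (2 * q) * M.det.re := by
  rw [Matrix.det_mul, Matrix.det_mul, det_rpow hA, mul_comm, ← mul_assoc, ← Complex.ofReal_mul,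
    Complex.re_ofReal_mul, ← Real.rpow_add (det_re_pos hA), two_mul]

theorem smul_rpow {N : ℕ} {A : Matrix (Fin N) (Fin N) ℂ} (hA : A.PosDef) {c : ℝ} (hc : 0 < c)
    (p : ℝ) : (c • A) ^ p = c ^ p • A ^ p := by
  have h0 : 0 ≤ A := Matrix.nonneg_iff_posSemidef.mpr hA.posSemidef
  have hsa : IsSelfAdjoint A := hA.1
  rw [CFC.rpow_eq_cfc_real (smul_nonneg hc.le h0), CFC.rpow_eq_cfc_real h0,
    ← cfc_comp_smul c _ A ((Matrix.finite_real_spectrum.image _).continuousOn _) hsa,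
    ← cfc_smul (c ^ p) _ A (Matrix.finite_real_spectrum.continuousOn _)]
  refine cfc_congr fun x hx => ?_
  exact Real.mul_rpow hc.le (spectrum_nonneg_of_nonneg h0 hx)

theorem conj_le {N : ℕ} {A M M' : Matrix (Fin N) (Fin N) ℂ} (hA : A.PosDef) (q : ℝ)
    (h : M ≤ M') : A ^ q * M * A ^ q ≤ A ^ q * M' * A ^ q :=
  IsSelfAdjoint.conjugate_le_conjugate h (rpow_posDef hA q).1

/-! ### Log-majorization and the positive definite case -/

/-- Log-majorization of `X ^ r` by `Y`, where `X = A^{1/2} B A^{1/2}` and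
`Y = A^{r/2} B^r A^{r/2}`. The Löwner–Heinz theorem is applied to the compression `C` of the
truncation `T = min (Y, t ^ r)`. -/
theorem log_majorization {N : ℕ} {A B : Matrix (Fin N) (Fin N) ℂ} (hA : A.PosDef) (hB : B.PosDef)
    {r : ℝ} (hr : 1 ≤ r) (hX : (A ^ (1 / 2 : ℝ) * B * A ^ (1 / 2 : ℝ)).PosDef)
    (hY : (A ^ (r / 2) * B ^ r * A ^ (r / 2)).PosDef) {t : ℝ} (ht : 0 < t) :
    (∏ i, min (hY.1.eigenvalues i) (t ^ r)) ^ (1 / r) ≤ ∏ i, min (hX.1.eigenvalues i) t := by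
  have hr0 : 0 < r := by linarith
  have hsA := hA.isStrictlyPositive
  have hsB := hB.isStrictlyPositive
  have hθ : (1 / r) ∈ Set.Icc (0 : ℝ) 1 := ⟨by positivity, by rw [div_le_one hr0]; exact hr⟩
  set Y := A ^ (r / 2) * B ^ r * A ^ (r / 2) with hYdef
  have hYsa : IsSelfAdjoint Y := hY.1
  set T := cfc (fun x => min x (t ^ r)) Y with hT
  have hcont : ∀ f : ℝ → ℝ, ContinuousOn f (spectrum ℝ Y) :=
    fun f => Matrix.finite_real_spectrum.continuousOn f
  have htr : 0 < t ^ r := Real.rpow_pos_of_pos ht r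
  have hm : ∀ i, 0 < min (hY.1.eigenvalues i) (t ^ r) := fun i => lt_min (hY.eigenvalues_pos i) htr
  have hTdet : T.det.re = ∏ i, min (hY.1.eigenvalues i) (t ^ r) := by
    rw [hT, det_cfc_eq _ _ hY.1, ← Complex.ofReal_prod, Complex.ofReal_re]
  have hTY : T ≤ Y := by
    conv_rhs => rw [← cfc_id' ℝ Y]
    exact cfc_mono (fun x _ => min_le_left _ _) (hcont _) (hcont _)
  have hTt : T ≤ algebraMap ℝ _ (t ^ r) :=
    cfc_le_algebraMap _ _ _ (fun x _ => min_le_right _ _) (hcont _)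
  have hTpos : T.PosDef := by
    have h0 : T.PosSemidef := by
      refine Matrix.nonneg_iff_posSemidef.mp (cfc_nonneg fun x hx => le_min ?_ htr.le)
      exact spectrum_nonneg_of_nonneg (Matrix.nonneg_iff_posSemidef.mpr hY.posSemidef) hx
    rw [h0.posDef_iff_det_ne_zero]
    intro h
    rw [h] at hTdet
    exact (Finset.prod_pos fun i _ => hm i).ne hTdet
  set C := A ^ (-(r / 2)) * T * A ^ (-(r / 2)) with hC
  have hCpos : C.PosDef := conj_posDef hA hTpos _
  have hCB : C ≤ B ^ r := by
    refine (conj_le hA (-(r / 2)) hTY).trans_eq ?_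
    calc A ^ (-(r / 2)) * Y * A ^ (-(r / 2))
        = (A ^ (-(r / 2)) * A ^ (r / 2)) * B ^ r * (A ^ (r / 2) * A ^ (-(r / 2))) := by
          rw [hYdef]; simp only [mul_assoc]
      _ = B ^ r := by rw [CFC.rpow_neg_mul_rpow, CFC.rpow_mul_rpow_neg, one_mul, mul_one]
  have hCA : C ≤ (t • A ^ (-1 : ℝ)) ^ r := by
    refine (conj_le hA (-(r / 2)) hTt).trans_eq ?_
    rw [smul_rpow (rpow_posDef hA _) ht, CFC.rpow_rpow A _ _ (by norm_num),
      Algebra.algebraMap_eq_smul_one,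
      mul_smul_comm, mul_one, smul_mul_assoc, ← CFC.rpow_add hA.isUnit]
    congr 2
    ring
  have hB' : C ^ (1 / r) ≤ B := by
    refine (CFC.rpow_le_rpow hθ hCB).trans_eq ?_
    rw [one_div, CFC.rpow_rpow_inv B r hr0.ne']
  have htA : (t • A ^ (-1 : ℝ)).PosDef := (rpow_posDef hA _).smul ht
  have hA' : C ^ (1 / r) ≤ t • A ^ (-1 : ℝ) := by
    refine (CFC.rpow_le_rpow hθ hCA).trans_eq ?_
    rw [one_div, CFC.rpow_rpow_inv _ r hr0.ne' htA.isStrictlyPositive]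
  have hX'0 := conj_posDef hA (rpow_posDef hCpos (1 / r)) (1 / 2)
  have hle := det_le_prod_min hX hX'0.posSemidef ht (conj_le hA (1 / 2) hB') (by
    refine (conj_le hA (1 / 2) hA').trans_eq ?_
    rw [mul_smul_comm, smul_mul_assoc, ← CFC.rpow_add hA.isUnit, ← CFC.rpow_add hA.isUnit]
    norm_num
    rw [CFC.rpow_zero A hsA.nonneg])
  refine le_of_eq_of_le ?_ hle
  -- `det X' = det A * ((det A)^{-r} * det T)^{1/r}`, and the powers of `det A` cancel.
  have ha := det_re_pos hA
  rw [det_conj hA, det_rpow hCpos, Complex.ofReal_re, hC, det_conj hA, hTdet,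
    Real.mul_rpow (by positivity) (Finset.prod_nonneg fun i _ => (hm i).le), ← mul_assoc,
    ← Real.rpow_mul ha.le, ← Real.rpow_add ha]
  have : 2 * (1 / 2) + 2 * -(r / 2) * (1 / r) = 0 := by field_simp; norm_num
  rw [this, Real.rpow_zero, one_mul]

/-- The Araki–Lieb–Thirring inequality for positive definite `A` and `B`. -/
theorem trace_le_of_posDef {N : ℕ} {A B : Matrix (Fin N) (Fin N) ℂ} (hA : A.PosDef)
    (hB : B.PosDef) {r s : ℝ} (hr : 1 ≤ r) (hs : 0 < s) :
    (Matrix.trace (cfc (fun t : ℝ => t ^ (r * s))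
      (A ^ (1 / 2 : ℝ) * B * A ^ (1 / 2 : ℝ)))).re ≤
    (Matrix.trace (cfc (fun t : ℝ => t ^ s) (A ^ (r / 2) * B ^ r * A ^ (r / 2)))).re := by
  have hr0 : 0 < r := by linarith
  have hX := conj_posDef hA hB (1 / 2)
  have hY := conj_posDef hA (rpow_posDef hB r) (r / 2)
  have hx := hX.eigenvalues_pos
  have hy := hY.eigenvalues_pos
  rw [trace_cfc_eq _ _ hX.1, trace_cfc_eq _ _ hY.1]
  have hlogmin : ∀ a b : ℝ, 0 < a → 0 < b → Real.log (min a b) = min (Real.log a) (Real.log b) := by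
    intro a b ha hb
    rcases le_total a b with h | h
    · rw [min_eq_left h, min_eq_left (Real.log_le_log ha h)]
    · rw [min_eq_right h, min_eq_right (Real.log_le_log hb h)]
  have key := sum_exp_le_of_sum_min (fun i => r * Real.log (hX.1.eigenvalues i))
    (fun i => Real.log (hY.1.eigenvalues i)) hs ?_ ?_
  · convert! key using 2 with i _ i _
    · rw [Real.rpow_def_of_pos (hx i)]; ring_nf
    · rw [Real.rpow_def_of_pos (hy i), mul_comm]
  · intro τ
    -- The majorization at level `τ` is the product inequality at `t = exp (τ / r)`.
    have ht : 0 < Real.exp (τ / r) := Real.exp_pos _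
    have htr : Real.exp (τ / r) ^ r = Real.exp τ := by
      rw [← Real.exp_mul]; field_simp
    have h := log_majorization hA hB hr hX hY ht
    rw [htr] at h
    have hm : ∀ i, 0 < min (hY.1.eigenvalues i) (Real.exp τ) :=
      fun i => lt_min (hy i) (Real.exp_pos _)
    have hn : ∀ i, 0 < min (hX.1.eigenvalues i) (Real.exp (τ / r)) := fun i => lt_min (hx i) ht
    have hmp := Finset.prod_pos (s := Finset.univ) fun i _ => hm i
    have h' := Real.log_le_log (Real.rpow_pos_of_pos hmp _) h
    rw [Real.log_rpow hmp, Real.log_prod fun i _ => (hm i).ne',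
      Real.log_prod fun i _ => (hn i).ne', one_div, inv_mul_le_iff₀ hr0, Finset.mul_sum] at h'
    convert! h' using 2 with i _ i _
    · rw [hlogmin _ _ (hy i) (Real.exp_pos _), Real.log_exp]
    · rw [hlogmin _ _ (hx i) ht, Real.log_exp, mul_min_of_nonneg _ _ hr0.le]
      field_simp
  · have ha := det_re_pos hA
    have hb := det_re_pos hB
    have e1 : Real.log (∏ i, hX.1.eigenvalues i) = Real.log A.det.re + Real.log B.det.re := by
      rw [← det_re_eq, det_conj hA, Real.log_mul (by positivity) hb.ne', Real.log_rpow ha]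
      ring
    have e2 : Real.log (∏ i, hY.1.eigenvalues i) =
        r * (Real.log A.det.re + Real.log B.det.re) := by
      rw [← det_re_eq, det_conj hA, det_rpow hB, Complex.ofReal_re,
        Real.log_mul (by positivity) (by positivity), Real.log_rpow ha, Real.log_rpow hb]
      ring
    rw [← Finset.mul_sum, ← Real.log_prod fun i _ => (hx i).ne',
      ← Real.log_prod fun i _ => (hy i).ne', e1, e2]

/-! ### Passage to semidefinite matrices -/

theorem continuousOn_cfc_rpow {N : ℕ} {p : ℝ} (hp : 0 ≤ p) :
    ContinuousOn (fun M : Matrix (Fin N) (Fin N) ℂ => cfc (fun t : ℝ => t ^ p) M)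
      {M | IsSelfAdjoint M} := by
  refine ContinuousOn.cfc_of_mem_nhdsSet (s := Set.univ) _ Filter.univ_mem continuousOn_id
    (fun _ h => h) (Real.continuous_rpow_const hp).continuousOn


theorem trace_le_of_posSemidef {N : ℕ} {A B : Matrix (Fin N) (Fin N) ℂ} (hA : A.PosSemidef)
    (hB : B.PosSemidef) {r s : ℝ} (hr : 1 ≤ r) (hs : 0 < s) :
    (Matrix.trace (cfc (fun t : ℝ => t ^ (r * s))
      (cfc (fun t : ℝ => t ^ (1 / 2 : ℝ)) A * B * cfc (fun t : ℝ => t ^ (1 / 2 : ℝ)) A))).re ≤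
    (Matrix.trace (cfc (fun t : ℝ => t ^ s)
      (cfc (fun t : ℝ => t ^ (r / 2)) A * cfc (fun t : ℝ => t ^ r) B *
        cfc (fun t : ℝ => t ^ (r / 2)) A))).re := by
  have hr0 : 0 < r := by linarith
  have hpd : ∀ M : Matrix (Fin N) (Fin N) ℂ, M.PosSemidef → ∀ ε : ℝ, 0 < ε →
      (M + ε • 1).PosDef := fun M hM ε hε => Matrix.PosDef.posSemidef_add hM
        (Matrix.PosDef.one.smul hε)
  have hsa : ∀ M : Matrix (Fin N) (Fin N) ℂ, M.PosSemidef → ∀ ε : ℝ,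
      IsSelfAdjoint (M + ε • 1) := fun M hM ε =>
    IsSelfAdjoint.add hM.1 (IsSelfAdjoint.smul (IsSelfAdjoint.all ε) (IsSelfAdjoint.one _))
  have hpath : ∀ M : Matrix (Fin N) (Fin N) ℂ, Continuous fun ε : ℝ => M + ε • 1 := by
    intro M; fun_prop
  have hpow : ∀ M : Matrix (Fin N) (Fin N) ℂ, M.PosSemidef → ∀ p : ℝ, 0 ≤ p →
      Continuous fun ε : ℝ => cfc (fun t : ℝ => t ^ p) (M + ε • 1) := fun M hM p hp =>
    (continuousOn_cfc_rpow hp).comp_continuous (hpath M) (hsa M hM)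
  have hconj : ∀ P Q : Matrix (Fin N) (Fin N) ℂ, IsSelfAdjoint Q → ∀ f : ℝ → ℝ,
      IsSelfAdjoint (cfc f P * Q * cfc f P) := fun P Q hQ f =>
    hQ.conjugate_self (cfc_predicate f P)
  have htrace : Continuous fun M : Matrix (Fin N) (Fin N) ℂ => (Matrix.trace M).re :=
    Complex.continuous_re.comp continuous_id.matrix_trace
  have hXc := htrace.comp ((continuousOn_cfc_rpow (N := N) (p := r * s)
    (by positivity)).comp_continuous
    (((hpow A hA (1 / 2) (by norm_num)).mul (hpath B)).mul (hpow A hA (1 / 2) (by norm_num)))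
    fun ε => hconj _ _ (hsa B hB ε) _)
  have hYc := htrace.comp ((continuousOn_cfc_rpow (N := N) (p := s) hs.le).comp_continuous
    (((hpow A hA (r / 2) (by positivity)).mul (hpow B hB r hr0.le)).mul
      (hpow A hA (r / 2) (by positivity)))
    fun ε => hconj _ _ (cfc_predicate _ _) _)
  have hX0 := (hXc.tendsto 0).mono_left (nhdsWithin_le_nhds (s := Set.Ioi 0))
  have hY0 := (hYc.tendsto 0).mono_left (nhdsWithin_le_nhds (s := Set.Ioi 0))
  have hlim := le_of_tendsto_of_tendsto hX0 hY0 (by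
    filter_upwards [self_mem_nhdsWithin] with ε hε
    have hAε := hpd A hA ε hε
    have hBε := hpd B hB ε hε
    have h := trace_le_of_posDef hAε hBε hr hs
    have hA0 := Matrix.nonneg_iff_posSemidef.mpr hAε.posSemidef
    have hB0 := Matrix.nonneg_iff_posSemidef.mpr hBε.posSemidef
    rw [CFC.rpow_eq_cfc_real hA0, CFC.rpow_eq_cfc_real hA0, CFC.rpow_eq_cfc_real hB0] at h
    exact h)
  simpa using hlim

end ArakiLiebThirring

/-- **The Araki–Lieb–Thirring inequality.** For `N × N` complex Hermitian positive semidefinite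
matrices `A`, `B` and real numbers `r ≥ 1`, `s > 0`,
`0 ≤ Tr ((A^{1/2} B A^{1/2})^{rs}) ≤ Tr ((A^{r/2} B^r A^{r/2})^s)`, all real powers of positive
semidefinite matrices being taken by the functional calculus. -/
theorem araki_lieb_thirring (N : ℕ) (A B : Matrix (Fin N) (Fin N) ℂ)
    (hA : A.PosSemidef) (hB : B.PosSemidef) (r s : ℝ) (hr : 1 ≤ r) (hs : 0 < s)
    (h1 : (hermFun (fun t => t ^ ((1 : ℝ) / 2)) A hA.1 * B *
        hermFun (fun t => t ^ ((1 : ℝ) / 2)) A hA.1).IsHermitian)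
    (h2 : (hermFun (fun t => t ^ (r / 2)) A hA.1 * hermFun (fun t => t ^ r) B hB.1 *
        hermFun (fun t => t ^ (r / 2)) A hA.1).IsHermitian) :
    0 ≤ (Matrix.trace (hermFun (fun t => t ^ (r * s)) _ h1)).re ∧
    (Matrix.trace (hermFun (fun t => t ^ (r * s)) _ h1)).re ≤
      (Matrix.trace (hermFun (fun t => t ^ s) _ h2)).re := by
  constructor
  · have hX : (hermFun (fun t => t ^ ((1 : ℝ) / 2)) A hA.1 * B *
        hermFun (fun t => t ^ ((1 : ℝ) / 2)) A hA.1).PosSemidef := by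
      have hH : (hermFun (fun t => t ^ ((1 : ℝ) / 2)) A hA.1).IsHermitian := by
        rw [ArakiLiebThirring.hermFun_eq_cfc]
        exact cfc_predicate _ A
      have h := hB.mul_mul_conjTranspose_same (hermFun (fun t => t ^ ((1 : ℝ) / 2)) A hA.1)
      rwa [hH.eq] at h
    rw [ArakiLiebThirring.hermFun_eq_cfc, ArakiLiebThirring.trace_cfc_eq _ _ h1]
    exact Finset.sum_nonneg fun i _ => Real.rpow_nonneg (hX.eigenvalues_nonneg i) _
  · simp only [ArakiLiebThirring.hermFun_eq_cfc]
    exact ArakiLiebThirring.trace_le_of_posSemidef hA hB hr hs
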